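/- arXiv:math/0307401 — 2 statements merged into one kernel-verified Lean document; each statement's English description precedes it below -/
import Mathlib

section
/- An infinite 7/3-power-free binary word is a fixed point of a non-identity morphism h : Σ₂* → Σ₂* if and only if it is equal to the Thue–Morse word μ^ω(0) or to its complement μ^ω(1). -/
/-- The Thue–Morse morphism `μ` on a single letter (`false` = 0, `true` = 1):
`μ(0) = 01`, `μ(1) = 10`. -/
def muLetter : Bool → List Bool
  | false => [false, true]
  | true  => [true, false]

/-- The Thue–Morse morphism `μ` on binary words. -/
def mu (w : List Bool) : List Bool := (w.map muLetter).flatten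

/-- `z` is a `β`-power (for a rational `β`): `z = xⁿx'` with `x'` a prefix of `x`
and `n + |x'|/|x| = β`. -/
def IsPower (β : ℚ) (z : List Bool) : Prop :=
  ∃ (n : ℕ) (x x' : List Bool), x ≠ [] ∧ x' <+: x ∧
    z = (List.replicate n x).flatten ++ x' ∧
    (n : ℚ) + (x'.length : ℚ) / (x.length : ℚ) = β

/-- The finite word `w` is `α`-power-free: no subword (contiguous factor) of `w`
is a `β`-power for any rational `β ≥ α`. -/
def PowerFree (α : ℝ) (w : List Bool) : Prop :=
  ∀ z : List Bool, z <:+: w → ∀ β : ℚ, α ≤ (β : ℝ) → ¬ IsPower β z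

/-- The finite word `w` contains an `α`-power: some subword of `w` is a
`β`-power for some rational `β ≥ α`. -/
def ContainsPower (α : ℝ) (w : List Bool) : Prop :=
  ∃ z : List Bool, z <:+: w ∧ ∃ β : ℚ, α ≤ (β : ℝ) ∧ IsPower β z

/-- `z` is a (finite) subword of the infinite word `w : ℕ → Bool`. -/
def InfSubword (z : List Bool) (w : ℕ → Bool) : Prop :=
  ∃ i : ℕ, z = (List.range z.length).map fun k => w (i + k)

/-- The infinite word `w` is `α`-power-free. -/
def PowerFreeInf (α : ℝ) (w : ℕ → Bool) : Prop :=
  ∀ z : List Bool, InfSubword z w → ∀ β : ℚ, α ≤ (β : ℝ) → ¬ IsPower β z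

/-- The infinite word `w` contains an `α`-power. -/
def ContainsPowerInf (α : ℝ) (w : ℕ → Bool) : Prop :=
  ∃ z : List Bool, InfSubword z w ∧ ∃ β : ℚ, α ≤ (β : ℝ) ∧ IsPower β z

/-- The length-`n` prefix of an infinite word. -/
def wordPrefix (w : ℕ → Bool) (n : ℕ) : List Bool := (List.range n).map w

/-- `h : Σ₂* → Σ₂*` is a morphism. -/
def IsMorphism (h : List Bool → List Bool) : Prop :=
  ∀ x y : List Bool, h (x ++ y) = h x ++ h y

/-- A morphism is non-erasing if it erases neither letter. -/
def NonErasing (h : List Bool → List Bool) : Prop :=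
  h [false] ≠ [] ∧ h [true] ≠ []

/-- The infinite word `u` is the image of the infinite word `w` under the morphism `h`
(obtained by concatenating the images of the letters of `w`): every `h(w[0..n))` is a
prefix of `u`, and these prefixes exhaust `u`. -/
def IsMorphImage (h : List Bool → List Bool) (w u : ℕ → Bool) : Prop :=
  (∀ n : ℕ, wordPrefix u (h (wordPrefix w n)).length = h (wordPrefix w n)) ∧
  ∀ m : ℕ, ∃ n : ℕ, m ≤ (h (wordPrefix w n)).length

/-- The complementation morphism `E` : `E(0) = 1`, `E(1) = 0`. -/
def eMorph (w : List Bool) : List Bool := w.map fun b => !b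

/-- The Thue–Morse word `μ^ω(0)` (`tm n` = parity of the binary digit sum of `n`). -/
def tm (n : ℕ) : Bool := (Nat.digits 2 n).sum % 2 == 1

/-- `μ³(0) = 01101001`. -/
def w01101001 : List Bool := [false, true, true, false, true, false, false, true]

/-- `μ³(1) = 10010110`. -/
def w10010110 : List Bool := [true, false, false, true, false, true, true, false]

/-!
In a `7/3`-power-free binary word, repeated letters (`00` or `11`) from position `1` on all start at
positions of one parity, so that, up to its first one or two letters, the word is a product of the
blocks `01` and `10`. Both squares of letters and both words `0101`, `1010` occur arbitrarily far
out.

Let `y` be the image of `w` under a morphism, with `w` and `y` both `7/3`-power-free. A square of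
odd period in `y` has an alternating root of length less than `5`. Applied to the images of `00`,
`11`, `0101` and `1010`, this leaves only pairs of letter images with both lengths even or both
lengths `1`, once images `010` and `101` are excluded by inspection. In the even case they are again
products of `01` and `10`, since the other alignment would force them to end in the same letter, and
by induction the morphism is `μᵏ` or `μᵏ` followed by complementation. If moreover `y = w`, there is
no complementation, and `k ≥ 1` unless the morphism is the identity; the fixed points of `μᵏ` with
`k ≥ 1` are the Thue–Morse word and its complement.
-/

/-- `x` has no factor of length `n` and period `p` with `n / p ≥ α`. This is `α`-power-freeness
phrased through periods, so that powers need not be cut into copies of their root. -/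
def PeriodFree {A : Type*} (α : ℝ) (x : ℕ → A) : Prop :=
  ∀ i p n : ℕ, 0 < p → α * p ≤ n → ∃ k, k + p < n ∧ x (i + k) ≠ x (i + k + p)

/-- The factor of length `n` of the infinite word `x` starting at position `i`. -/
def factor {A : Type*} (x : ℕ → A) (i n : ℕ) : List A :=
  (List.range n).map fun k => x (i + k)

section Factor

variable {A : Type*} {x : ℕ → A}

lemma length_factor (i n : ℕ) : (factor x i n).length = n := by
  simp [factor]

lemma factor_add (i a b : ℕ) : factor x i (a + b) = factor x i a ++ factor x (i + a) b := by
  simp [factor, List.range_add, add_assoc]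

lemma factor_eq_replicate_append {i p r N : ℕ}
    (hper : ∀ k, k + p < N * p + r → x (i + k) = x (i + k + p)) :
    factor x i (N * p + r) = (List.replicate N (factor x i p)).flatten ++ factor x i r := by
  induction N with
  | zero => simp
  | succ N ih =>
    have hlen : (N + 1) * p + r = p + (N * p + r) := by ring
    rw [hlen] at hper ⊢
    have hshift : factor x (i + p) (N * p + r) = factor x i (N * p + r) := by
      refine List.map_congr_left fun k hk => ?_
      rw [hper k (by have := List.mem_range.mp hk; omega), add_right_comm]
    rw [List.replicate_succ, List.flatten_cons, List.append_assoc,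
      ← ih fun k hk => hper k (by omega), factor_add, hshift]

end Factor

lemma isPower_factor {x : ℕ → Bool} {i p n : ℕ} (hp : 0 < p)
    (hper : ∀ k, k + p < n → x (i + k) = x (i + k + p)) :
    IsPower ((n : ℚ) / p) (factor x i n) := by
  have hdiv : n / p * p + n % p = n := Nat.div_add_mod' n p
  refine ⟨n / p, factor x i p, factor x i (n % p), ?_, ?_, ?_, ?_⟩
  · rw [← List.length_pos_iff, length_factor]
    exact hp
  · obtain ⟨c, hc⟩ := Nat.exists_eq_add_of_le (Nat.mod_lt n hp).le
    exact ⟨factor x (i + n % p) c, by rw [← factor_add, ← hc]⟩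
  · rw [← factor_eq_replicate_append (by rwa [hdiv]), hdiv]
  · rw [length_factor, length_factor]
    field_simp
    exact_mod_cast hdiv

lemma PowerFreeInf.periodFree {α : ℝ} {w : ℕ → Bool} (hw : PowerFreeInf α w) :
    PeriodFree α w := by
  intro i p n hp hn
  by_contra! hper
  refine hw (factor w i n) ⟨i, by rw [length_factor, factor]⟩ (n / p) ?_ (isPower_factor hp hper)
  push_cast
  rwa [le_div_iff₀ (by exact_mod_cast hp)]

/-! ### Repeated letters in `7/3`-power-free words -/

namespace PeriodFree

lemma desubstitute {α : ℝ} {x : ℕ → Bool} (hx : PeriodFree α x) {e : ℕ}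
    (he : ∀ j, x (2 * j + e + 1) = !x (2 * j + e)) : PeriodFree α fun n => x (2 * n + e) := by
  intro i p n hp hn
  obtain ⟨k, hk, hne⟩ := hx (2 * i + e) (2 * p) (2 * n) (by omega) (by push_cast; linarith)
  obtain ⟨c, rfl | rfl⟩ := Nat.even_or_odd' k
  · refine ⟨c, by omega, ?_⟩
    convert hne using 2 <;> ring_nf
  · refine ⟨c, by omega, ?_⟩
    rw [show 2 * i + e + (2 * c + 1) = 2 * (i + c) + e + 1 by ring,
      show 2 * (i + c) + e + 1 + 2 * p = 2 * (i + c + p) + e + 1 by ring, he, he] at hne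
    exact fun heq => hne (congrArg _ heq)

variable {x : ℕ → Bool} (hx : PeriodFree (7 / 3) x)

include hx

lemma next_eq_not {i : ℕ} (h : x i = x (i + 1)) : x (i + 2) = !x (i + 1) := by
  obtain ⟨k, hk, hne⟩ := hx i 1 3 one_pos (by norm_num)
  obtain rfl | rfl : k = 0 ∨ k = 1 := by omega
  · exact absurd h hne
  · exact Bool.eq_not.mpr hne.symm

lemma prev_eq_not {i : ℕ} (h : x (i + 1) = x (i + 2)) : x i = !x (i + 1) :=
  Bool.eq_not.mpr fun h' => by simpa [h] using hx.next_eq_not h'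

lemma exists_repeat (i : ℕ) : ∃ k < 4, x (i + k) = x (i + k + 1) := by
  obtain ⟨k, hk, hne⟩ := hx i 2 5 two_pos (by norm_num)
  by_cases h : x (i + k) = x (i + k + 1)
  · exact ⟨k, by omega, h⟩
  · exact ⟨k + 1, by omega, Bool.not_inj ((Bool.eq_not.mpr h).symm.trans (Bool.eq_not.mpr hne))⟩

lemma not_repeat_add_three {i : ℕ} (h : x (i + 1) = x (i + 2)) : x (i + 4) ≠ x (i + 5) := by
  intro h'
  have h₀ := hx.prev_eq_not h
  have h₃ := hx.next_eq_not h
  have h₃' := hx.prev_eq_not h'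
  have h₆ := hx.next_eq_not h'
  have h₂₄ : x (i + 2) = x (i + 4) := Bool.not_inj (h₃.symm.trans h₃')
  obtain ⟨k, hk, hne⟩ := hx i 3 7 three_pos (by norm_num)
  obtain rfl | rfl | rfl | rfl : k = 0 ∨ k = 1 ∨ k = 2 ∨ k = 3 := by omega
  all_goals grind

lemma next_repeat {i : ℕ} (h : x (i + 1) = x (i + 2)) :
    (x (i + 3) = !x (i + 1) ∧ x (i + 4) = !x (i + 1)) ∨
      (x (i + 5) = !x (i + 1) ∧ x (i + 6) = !x (i + 1)) := by
  have h₃ := hx.next_eq_not h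
  have h₄ := Bool.eq_not.mpr (hx.not_repeat_add_three h)
  by_cases h₃₄ : x (i + 3) = x (i + 4)
  · exact .inl (by grind)
  · have h₃₅ : x (i + 3) = x (i + 5) := Bool.not_inj (by grind)
    obtain ⟨k, hk, hrep⟩ := hx.exists_repeat (i + 2)
    obtain rfl | rfl | rfl | rfl : k = 0 ∨ k = 1 ∨ k = 2 ∨ k = 3 := by omega
    all_goals grind

lemma even_of_repeat_add {i d : ℕ} (hi : x (i + 1) = x (i + 2))
    (hd : x (i + d + 1) = x (i + d + 2)) : Even d := by
  induction d using Nat.strong_induction_on generalizing i with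
  | _ d ih =>
    by_contra hodd
    have hd₁ : d ≠ 1 := by
      rintro rfl
      have := hx.next_eq_not hi
      grind
    have hd₃ : d ≠ 3 := by
      rintro rfl
      exact hx.not_repeat_add_three hi hd
    have descend : ∀ c, 0 < c → Even c → c ≤ d → x (i + c + 1) = x (i + c + 2) → False := by
      intro c hc heven hcd hrep
      have := ih (d - c) (by omega) hrep (by rwa [show i + c + (d - c) = i + d by omega])
      grind
    obtain ⟨h₁, h₂⟩ | ⟨h₁, h₂⟩ := hx.next_repeat hi
    · exact descend 2 two_pos even_two (by grind) (h₁.trans h₂.symm)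
    · exact descend 4 four_pos (by decide) (by grind) (h₁.trans h₂.symm)

lemma repeat_mod_two_eq {i j : ℕ} (hi : x (i + 1) = x (i + 2)) (hj : x (j + 1) = x (j + 2)) :
    i % 2 = j % 2 := by
  wlog hij : i ≤ j generalizing i j
  · exact (this hj hi (by omega)).symm
  obtain ⟨d, rfl⟩ := Nat.exists_eq_add_of_le hij
  have := Nat.even_iff.mp (hx.even_of_repeat_add hi hj)
  omega

lemma exists_paired :
    (∀ j, x (2 * j + 1 + 1) = !x (2 * j + 1)) ∨ ∀ j, x (2 * j + 2 + 1) = !x (2 * j + 2) := by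
  obtain ⟨k, -, hk⟩ := hx.exists_repeat 1
  have hk : x (k + 1) = x (k + 2) := by convert hk using 2 <;> ring
  obtain heven | hodd := Nat.mod_two_eq_zero_or_one k
  · refine .inr fun j => Bool.eq_not.mpr fun hj => ?_
    have := hx.repeat_mod_two_eq hk (j := 2 * j + 1) hj.symm
    omega
  · refine .inl fun j => Bool.eq_not.mpr fun hj => ?_
    have := hx.repeat_mod_two_eq hk (j := 2 * j) hj.symm
    omega

lemma exists_square (N : ℕ) (b : Bool) : ∃ n ≥ N, x n = b ∧ x (n + 1) = b := by
  obtain ⟨k, -, hk⟩ := hx.exists_repeat (N + 1)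
  have hk : x (N + k + 1) = x (N + k + 2) := by convert hk using 2 <;> ring
  by_cases hb : x (N + k + 1) = b
  · exact ⟨N + k + 1, by omega, hb, hk ▸ hb⟩
  · have hb : (!x (N + k + 1)) = b := Bool.not_eq.mpr hb
    obtain ⟨h₁, h₂⟩ | ⟨h₁, h₂⟩ := hx.next_repeat hk
    · exact ⟨N + k + 3, by omega, h₁.trans hb, h₂.trans hb⟩
    · exact ⟨N + k + 5, by omega, h₁.trans hb, h₂.trans hb⟩

lemma exists_alternating (N : ℕ) (b : Bool) :
    ∃ n ≥ N, x n = b ∧ x (n + 1) = !b ∧ x (n + 2) = b ∧ x (n + 3) = !b := by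
  obtain ⟨e, he⟩ : ∃ e, ∀ j, x (2 * j + e + 1) = !x (2 * j + e) :=
    hx.exists_paired.elim (⟨1, ·⟩) (⟨2, ·⟩)
  obtain ⟨n, hn, h₀, h₂⟩ := (hx.desubstitute he).exists_square N b
  rw [show 2 * (n + 1) + e = 2 * n + e + 2 by ring] at h₂
  have h₃ := he (n + 1)
  rw [show 2 * (n + 1) + e = 2 * n + e + 2 by ring] at h₃
  exact ⟨2 * n + e, by omega, h₀, by rw [he, h₀], h₂, by rw [h₃, h₂]⟩

/-- A repeated letter inside the root would recur after the odd distance `L`. -/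
lemma alternating_of_odd_square {i L : ℕ} (hi : 0 < i) (hL : Odd L)
    (hsq : ∀ k < L, x (i + k) = x (i + L + k)) :
    L < 5 ∧ ∀ k, k + 1 < L → x (i + (k + 1)) = !x (i + k) := by
  obtain ⟨i, rfl⟩ := Nat.exists_eq_add_of_le' hi
  have halt : ∀ k, k + 1 < L → x (i + 1 + k) ≠ x (i + 1 + (k + 1)) := by
    intro k hk hrep
    have hrep' := hrep
    rw [hsq k (by omega), hsq (k + 1) hk] at hrep'
    rw [show i + 1 + k = i + k + 1 by ring, show i + 1 + (k + 1) = i + k + 2 by ring] at hrep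
    have := hx.even_of_repeat_add hrep (d := L) (by convert hrep' using 2 <;> ring)
    exact Nat.not_even_iff_odd.mpr hL this
  refine ⟨?_, fun k hk => Bool.eq_not.mpr (halt k hk).symm⟩
  by_contra! hlong
  obtain ⟨k, hk, hrep⟩ := hx.exists_repeat (i + 1)
  exact halt k (by omega) hrep

end PeriodFree

/-! ### The Thue–Morse word -/

lemma tm_zero : tm 0 = false := by
  simp [tm]

lemma tm_two_mul (n : ℕ) : tm (2 * n) = tm n := by
  obtain rfl | hn := n.eq_zero_or_pos
  · rfl
  · simp [tm, Nat.digits_def' one_lt_two (by omega : 0 < 2 * n)]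

lemma tm_two_mul_add_one (n : ℕ) : tm (2 * n + 1) = !tm n := by
  rw [tm, tm, Nat.digits_add_two_add_one 0 (2 * n)]
  simp only [Nat.mul_add_mod_self_left, List.sum_cons]
  rw [show (2 * n + 1) / 2 = n by omega]
  grind

lemma tm_two_pow_mul_add (n : ℕ) {k i : ℕ} (hi : i < 2 ^ k) :
    tm (2 ^ k * n + i) = (tm n ^^ tm i) := by
  induction k generalizing i with
  | zero =>
    obtain rfl : i = 0 := by omega
    simp [tm_zero]
  | succ k ih =>
    rw [pow_succ'] at hi ⊢
    obtain ⟨j, rfl | rfl⟩ := Nat.even_or_odd' i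
    · rw [mul_assoc, ← mul_add, tm_two_mul, tm_two_mul, ih (by omega)]
    · rw [mul_assoc, ← add_assoc, ← mul_add, tm_two_mul_add_one, tm_two_mul_add_one,
        ih (by omega), Bool.xor_not]

/-! ### Block images -/

/-- The position at which the image of the `n`-th letter of `w` begins, when the image of a letter
`a` has length `len a`. -/
def blockStart {A : Type*} (len : A → ℕ) (w : ℕ → A) (n : ℕ) : ℕ :=
  ∑ i ∈ Finset.range n, len (w i)

/-- `y` begins with the image of `w` under the morphism sending each letter `a` to the word
`f a 0, …, f a (len a - 1)`. Letter images are functions rather than lists because the argument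
passes to the letters of `y` in positions of a fixed parity; values of `f a` beyond `len a` are
irrelevant. -/
def IsBlockImage {A B : Type*} (f : A → ℕ → B) (len : A → ℕ) (w : ℕ → A) (y : ℕ → B) : Prop :=
  ∀ n, ∀ k < len (w n), y (blockStart len w n + k) = f (w n) k

section BlockStart

variable {A : Type*} {len : A → ℕ} {w : ℕ → A}

lemma blockStart_zero : blockStart len w 0 = 0 :=
  Finset.sum_range_zero _

lemma blockStart_succ (n : ℕ) : blockStart len w (n + 1) = blockStart len w n + len (w n) :=
  Finset.sum_range_succ _ _

lemma le_blockStart (hlen : ∀ a, 0 < len a) (n : ℕ) : n ≤ blockStart len w n := by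
  simpa [blockStart] using
    Finset.card_nsmul_le_sum (Finset.range n) (fun i => len (w i)) 1 fun i _ => hlen (w i)

lemma even_blockStart (heven : ∀ a, Even (len a)) (n : ℕ) : Even (blockStart len w n) :=
  Finset.even_sum _ fun i _ => heven (w i)

lemma blockStart_half (heven : ∀ a, Even (len a)) (n : ℕ) :
    2 * blockStart (fun a => len a / 2) w n = blockStart len w n := by
  rw [blockStart, Finset.mul_sum]
  exact Finset.sum_congr rfl fun i _ => Nat.two_mul_div_two_of_even (heven (w i))

end BlockStart

namespace IsBlockImage

section Blocks

variable {A B : Type*} {f : A → ℕ → B} {len : A → ℕ} {w : ℕ → A} {y : ℕ → B}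
  (him : IsBlockImage f len w y)

include him

lemma half (heven : ∀ a, Even (len a)) {e : ℕ} (he : e < 2) :
    IsBlockImage (fun a k => f a (2 * k + e)) (fun a => len a / 2) w fun n => y (2 * n + e) := by
  intro n k hk
  have := Nat.two_mul_div_two_of_even (heven (w n))
  beta_reduce at hk ⊢
  rw [← him n (2 * k + e) (by omega), ← blockStart_half heven]
  ring_nf

variable {n k : ℕ} {a b c d : A}

lemma apply (ha : w n = a) (hk : k < len a) : y (blockStart len w n + k) = f a k := by
  subst ha
  exact him n k hk

lemma apply_succ (ha : w n = a) (hb : w (n + 1) = b) (hk : k < len b) :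
    y (blockStart len w n + len a + k) = f b k := by
  rw [← ha, ← blockStart_succ, him.apply hb hk]

lemma apply_add_two (ha : w n = a) (hb : w (n + 1) = b) (hc : w (n + 2) = c) (hk : k < len c) :
    y (blockStart len w n + len a + len b + k) = f c k := by
  rw [← ha, ← blockStart_succ, him.apply_succ hb hc hk]

lemma apply_add_three (ha : w n = a) (hb : w (n + 1) = b) (hc : w (n + 2) = c)
    (hd : w (n + 3) = d) (hk : k < len d) :
    y (blockStart len w n + len a + len b + len c + k) = f d k := by
  rw [← ha, ← blockStart_succ, him.apply_add_two hb hc hd hk]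

end Blocks

lemma len_pos {f : Bool → ℕ → Bool} {len : Bool → ℕ} {w y : ℕ → Bool}
    (him : IsBlockImage f len w y) (hw : PeriodFree (7 / 3) w) (hy : PeriodFree (7 / 3) y)
    (hunbounded : ∀ m, ∃ n, m ≤ blockStart len w n) (b : Bool) : 0 < len b := by
  by_contra! hb
  obtain ⟨e, he⟩ : ∃ e, ∀ j, w (2 * j + e + 1) = !w (2 * j + e) :=
    hw.exists_paired.elim (⟨1, ·⟩) (⟨2, ·⟩)
  have hpair (j : ℕ) : (w (2 * j + e) = b ∧ w (2 * j + e + 1) = !b) ∨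
      (w (2 * j + e) = !b ∧ w (2 * j + e + 1) = b) := by
    have := he j
    cases b <;> grind
  have hstart (j : ℕ) : blockStart len w (2 * j + e) = blockStart len w e + len (!b) * j := by
    induction j with
    | zero => simp
    | succ j ih =>
      rw [show 2 * (j + 1) + e = 2 * j + e + 1 + 1 by ring, blockStart_succ, blockStart_succ, ih]
      obtain ⟨h₀, h₁⟩ | ⟨h₀, h₁⟩ := hpair j <;> rw [h₀, h₁] <;> grind
  have hperiodic (j k : ℕ) (hk : k < len !b) :
      y (blockStart len w e + len (!b) * j + k) = f (!b) k := by
    rw [← hstart]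
    obtain ⟨h₀, h₁⟩ | ⟨h₀, -⟩ := hpair j
    · rw [← him.apply_succ h₀ h₁ hk, Nat.le_zero.mp hb, add_zero]
    · exact him.apply h₀ hk
  have hpos : 0 < len !b := by
    by_contra! hzero
    have hlen : ∀ a, len a = 0 := by cases b <;> simp_all
    obtain ⟨n, hn⟩ := hunbounded 1
    simp [blockStart, hlen] at hn
  obtain ⟨k, -, hne⟩ := hy (blockStart len w e) (len !b) (3 * len !b) hpos
    (by push_cast; nlinarith)
  have hmod := Nat.mod_lt k hpos
  refine hne ?_
  rw [← Nat.div_add_mod k (len !b), ← add_assoc, hperiodic _ _ hmod, add_right_comm,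
    add_assoc _ _ (len !b), ← mul_add_one, hperiodic _ _ hmod]

variable {f : Bool → ℕ → Bool} {len : Bool → ℕ} {w y : ℕ → Bool}
  (him : IsBlockImage f len w y) (hlen : ∀ b, 0 < len b)
  (hw : PeriodFree (7 / 3) w) (hy : PeriodFree (7 / 3) y)

include him hlen hw hy

lemma alternating_of_odd_len {b : Bool} (hb : Odd (len b)) :
    len b < 5 ∧ ∀ k, k + 1 < len b → f b (k + 1) = !f b k := by
  obtain ⟨n, hn, h₀, h₁⟩ := hw.exists_square 1 b
  have hstart := hn.trans (le_blockStart (w := w) hlen n)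
  obtain ⟨hlt, halt⟩ := hy.alternating_of_odd_square hstart hb fun k hk => by
    rw [him.apply h₀ hk, him.apply_succ h₀ h₁ hk]
  refine ⟨hlt, fun k hk => ?_⟩
  rw [← him.apply h₀ hk, ← him.apply h₀ (k.lt_succ_self.trans hk), halt k hk]

lemma alternating_of_odd_len_add_len {b : Bool} (hb : Odd (len b + len !b)) :
    len b + len (!b) < 5 ∧ (∀ k, k + 1 < len b → f b (k + 1) = !f b k) ∧
      f (!b) 0 = !f b (len b - 1) := by
  obtain ⟨n, hn, h₀, h₁, h₂, h₃⟩ := hw.exists_alternating 1 b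
  have hstart := hn.trans (le_blockStart (w := w) hlen n)
  obtain ⟨hlt, halt⟩ := hy.alternating_of_odd_square hstart hb fun k hk => by
    rw [← add_assoc]
    rcases lt_or_ge k (len b) with hkb | hkb
    · rw [him.apply h₀ hkb, him.apply_add_two h₀ h₁ h₂ hkb]
    · obtain ⟨j, rfl⟩ := Nat.exists_eq_add_of_le hkb
      rw [← add_assoc, ← add_assoc, him.apply_succ h₀ h₁ (by omega),
        him.apply_add_three h₀ h₁ h₂ h₃ (by omega)]
  have hb_pos := hlen b
  have hnot_pos := hlen !b
  refine ⟨hlt, fun k hk => ?_, ?_⟩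
  · rw [← him.apply h₀ hk, ← him.apply h₀ (k.lt_succ_self.trans hk), halt k (by omega)]
  · rw [← him.apply_succ h₀ h₁ hnot_pos, ← him.apply h₀ (Nat.sub_one_lt_of_lt hb_pos),
      ← halt (len b - 1) (by omega), Nat.sub_add_cancel hb_pos, add_zero]

lemma even_len_add_len : Even (len true + len false) := by
  by_contra hodd
  rw [Nat.not_even_iff_odd] at hodd
  obtain ⟨hlt, halt, hjoin⟩ := him.alternating_of_odd_len_add_len hlen hw hy (b := true) hodd
  obtain ⟨-, halt', hjoin'⟩ := him.alternating_of_odd_len_add_len hlen hw hy (b := false)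
    (by rwa [add_comm] at hodd)
  have htrue := hlen true
  have hfalse := hlen false
  rw [Bool.not_true] at hlt hjoin
  rw [Bool.not_false] at hjoin'
  obtain ⟨h₁, h₂⟩ | ⟨h₂, h₁⟩ :
      len true = 1 ∧ len false = 2 ∨ len true = 2 ∧ len false = 1 := by grind
  · rw [h₂, show 2 - 1 = 0 + 1 from rfl, halt' 0 (by omega), hjoin, h₁] at hjoin'
    simp at hjoin'
  · rw [h₂, show 2 - 1 = 0 + 1 from rfl, halt 0 (by omega), hjoin', h₁] at hjoin
    simp at hjoin

/-- Write `f b = aāa`. If `f (!b)` begins with `a`, then the image of `b, b, !b` begins with the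
`7/3`-power `aāaaāaa`; otherwise the image of `b, !b, b` begins with the `5/2`-power `aāaāa`. -/
lemma len_ne_three (hodd : ∀ b, Odd (len b)) (b : Bool) : len b ≠ 3 := by
  intro hb
  have halt (c : Bool) := (him.alternating_of_odd_len hlen hw hy (hodd c)).2
  have hb₁ := halt b 0 (by omega)
  have hb₂ := halt b 1 (by omega)
  have hpos := hlen !b
  by_cases hfirst : f (!b) 0 = f b 0
  · obtain ⟨n, -, h₀, h₁⟩ := hw.exists_square 0 b
    have h₂ : w (n + 2) = !b := by rw [hw.next_eq_not (h₀.trans h₁.symm), h₁]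
    obtain ⟨k, hk, hne⟩ := hy (blockStart len w n) 3 7 three_pos (by norm_num)
    rw [add_right_comm, ← hb] at hne
    rcases lt_or_ge k (len b) with hk' | hk'
    · exact hne (by rw [him.apply h₀ hk', him.apply_succ h₀ h₁ hk'])
    · obtain rfl : k = len b + 0 := by omega
      refine hne ?_
      rw [← add_assoc, ← add_assoc, him.apply_succ h₀ h₁ (hlen b), him.apply_add_two h₀ h₁ h₂ hpos,
        hfirst]
  · obtain ⟨n, -, h₀, h₁, h₂, -⟩ := hw.exists_alternating 0 b
    have y₀ := him.apply h₀ (k := 0) (by omega)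
    have y₁ := him.apply h₀ (k := 1) (by omega)
    have y₂ := him.apply h₀ (k := 2) (by omega)
    have y₃ := him.apply_succ h₀ h₁ hpos
    have y₄ : y (blockStart len w n + 4) = f b 0 := by
      obtain hone | hlong : len (!b) = 1 ∨ 1 < len !b := by omega
      · rw [← him.apply_add_two h₀ h₁ h₂ (hlen b), hb, hone]
      · rw [show 4 = len b + 1 by omega, ← add_assoc, him.apply_succ h₀ h₁ hlong, halt _ 0 hlong]
        exact Bool.not_eq.mpr hfirst
    have hfirst' := Bool.eq_not.mpr hfirst
    rw [hb] at y₃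
    obtain ⟨k, hk, hrep⟩ := hy.exists_repeat (blockStart len w n)
    obtain rfl | rfl | rfl | rfl : k = 0 ∨ k = 1 ∨ k = 2 ∨ k = 3 := by omega
    all_goals grind

lemma all_even_or_all_one : (∀ b, Even (len b)) ∨ ∀ b, len b = 1 := by
  have hsum := him.even_len_add_len hlen hw hy
  by_cases htrue : Even (len true)
  · exact .inl (Bool.forall_bool.mpr ⟨(Nat.even_add.mp hsum).mp htrue, htrue⟩)
  · have hodd : ∀ b, Odd (len b) := by
      simp only [← Nat.not_even_iff_odd]
      exact Bool.forall_bool.mpr ⟨mt (Nat.even_add.mp hsum).mpr htrue, htrue⟩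
    refine .inr fun b => ?_
    have hlt := (him.alternating_of_odd_len hlen hw hy (hodd b)).1
    have hthree := him.len_ne_three hlen hw hy hodd b
    have := hodd b
    grind

omit hlen hw in
lemma ne_of_all_one (hone : ∀ b, len b = 1) : f true 0 ≠ f false 0 := by
  intro heq
  have hconst : ∀ b, f b 0 = f true 0 := Bool.forall_bool.mpr ⟨heq.symm, rfl⟩
  have hy_const : ∀ n, y n = f true 0 := by
    intro n
    rw [← hconst (w n), ← him n 0 (by rw [hone]; exact one_pos)]
    simp [blockStart, hone]
  obtain ⟨k, -, hne⟩ := hy 0 1 3 one_pos (by norm_num)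
  exact hne (by rw [hy_const, hy_const])

omit hy in
lemma block_eq_not (heven : ∀ b, Even (len b)) (hpair : ∀ j, y (2 * j + 2 + 1) = !y (2 * j + 2))
    {b : Bool} {k : ℕ} (hk : 2 * k < len b) : f b (2 * k + 1) = !f b (2 * k) := by
  obtain ⟨n, hn, hb, -⟩ := hw.exists_square 2 b
  obtain ⟨m, hm⟩ := even_blockStart (w := w) heven n
  have := le_blockStart (w := w) hlen n
  obtain ⟨l, hl⟩ := heven b
  rw [← him.apply hb hk, ← him.apply hb (k := 2 * k + 1) (by omega),
    show blockStart len w n + 2 * k = 2 * (m + k - 1) + 2 by omega, ← hpair]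
  congr 1
  omega

omit hy in
lemma eq_not_of_paired (heven : ∀ b, Even (len b))
    (hpair : ∀ j, y (2 * j + 2 + 1) = !y (2 * j + 2)) (j : ℕ) : y (2 * j + 1) = !y (2 * j) := by
  obtain _ | j := j
  · have hpos := hlen (w 0)
    have hlong : 1 < len (w 0) := by have := heven (w 0); grind
    have h₀ := him 0 0 hpos
    have h₁ := him 0 1 hlong
    rw [blockStart_zero, zero_add] at h₀ h₁
    rw [mul_zero, zero_add, h₀, h₁]
    exact him.block_eq_not hlen hw heven hpair (k := 0) hpos
  · exact hpair j

omit hw hy in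
lemma first_eq_not_last (heven : ∀ b, Even (len b))
    (hpair : ∀ j, y (2 * j + 1 + 1) = !y (2 * j + 1)) (n : ℕ) :
    f (w (n + 1)) 0 = !f (w n) (len (w n) - 1) := by
  have hpos := hlen (w n)
  obtain ⟨m, hm⟩ := even_blockStart (w := w) heven n
  obtain ⟨l, hl⟩ := heven (w n)
  rw [← him (n + 1) 0 (hlen _), ← him n _ (Nat.sub_one_lt_of_lt hpos), blockStart_succ, add_zero,
    show blockStart len w n + len (w n) = 2 * (m + l - 1) + 1 + 1 by omega, hpair]
  congr 2
  omega

omit hy in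
lemma last_eq_last (heven : ∀ b, Even (len b))
    (hpair : ∀ j, y (2 * j + 1 + 1) = !y (2 * j + 1)) :
    f true (len true - 1) = f false (len false - 1) := by
  have hjoin := him.first_eq_not_last hlen heven hpair
  obtain ⟨n, -, h₀, h₁⟩ := hw.exists_square 0 true
  obtain ⟨m, -, g₀, g₁, -⟩ := hw.exists_alternating 0 false
  have hn := hjoin n
  have hm := hjoin m
  rw [h₀, h₁] at hn
  rw [g₀, g₁] at hm
  exact Bool.not_inj (hn.symm.trans hm)

/-- The blocks are those of `μᵏ` if `c = false`, and their complements if `c = true`. -/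
theorem exists_eq_xor_tm :
    ∃ k c, ∀ b, len b = 2 ^ k ∧ ∀ i < 2 ^ k, f b i = (b ^^ c ^^ tm i) := by
  induction hN : len true using Nat.strong_induction_on generalizing f len y with
  | _ N ih =>
    obtain heven | hone := him.all_even_or_all_one hlen hw hy
    · have halved {e : ℕ} (he : e < 2) (hpair : ∀ j, y (2 * j + e + 1) = !y (2 * j + e)) :
          ∃ k c, ∀ b, len b = 2 * 2 ^ k ∧ ∀ i < 2 ^ k, f b (2 * i + e) = (b ^^ c ^^ tm i) := by
        obtain ⟨k, c, hkc⟩ := ih _ (Nat.div_lt_self (hN ▸ hlen true) one_lt_two)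
          (him.half heven he)
          (fun b => by have := heven b; have := hlen b; grind) (hy.desubstitute hpair) (by rw [hN])
        exact ⟨k, c, fun b =>
          ⟨by rw [← (hkc b).1, Nat.two_mul_div_two_of_even (heven b)], (hkc b).2⟩⟩
      obtain hpair | hpair := hy.exists_paired
      · obtain ⟨k, c, hkc⟩ := halved one_lt_two hpair
        have hlast := him.last_eq_last hlen hw heven hpair
        have hpos := k.two_pow_pos
        have hb (b : Bool) : f b (len b - 1) = (b ^^ c ^^ tm (2 ^ k - 1)) := by
          rw [← (hkc b).2 _ (by omega), (hkc b).1]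
          congr 1
          omega
        rw [hb, hb] at hlast
        simp at hlast
      · have hpair' := him.eq_not_of_paired hlen hw heven hpair
        obtain ⟨k, c, hkc⟩ := halved two_pos hpair'
        refine ⟨k + 1, c, fun b => ⟨by rw [(hkc b).1, pow_succ'], fun i hi => ?_⟩⟩
        rw [pow_succ'] at hi
        obtain ⟨j, rfl | rfl⟩ := Nat.even_or_odd' i
        · rw [tm_two_mul, ← (hkc b).2 j (by omega), add_zero]
        · rw [tm_two_mul_add_one, him.block_eq_not hlen hw heven hpair (by rw [(hkc b).1]; omega),
            ← add_zero (2 * j), (hkc b).2 j (by omega), Bool.xor_not]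
    · refine ⟨0, f false 0, fun b => ⟨hone b, fun i hi => ?_⟩⟩
      obtain rfl : i = 0 := by omega
      have hne := him.ne_of_all_one hy hone
      rw [tm_zero]
      cases b
      · simp
      · simpa using Bool.eq_not.mpr hne

end IsBlockImage

theorem IsBlockImage.eq_xor_tm {f : Bool → ℕ → Bool} {len : Bool → ℕ} {w : ℕ → Bool}
    (hfix : IsBlockImage f len w w) (hlen : ∀ b, 0 < len b) (hw : PeriodFree (7 / 3) w)
    (hne : ¬∀ b, len b = 1 ∧ f b 0 = b) (n : ℕ) : w n = (w 0 ^^ tm n) := by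
  obtain ⟨k, c, hkc⟩ := hfix.exists_eq_xor_tm hlen hw hw
  have hstart (n : ℕ) : blockStart len w n = 2 ^ k * n := by
    simp [blockStart, (hkc _).1, mul_comm]
  have hblock (n i : ℕ) (hi : i < 2 ^ k) : w (2 ^ k * n + i) = (w n ^^ c ^^ tm i) := by
    rw [← hstart, hfix n i ((hkc _).1 ▸ hi), (hkc _).2 i hi]
  obtain rfl : c = false := by
    have h₀ := hblock 0 0 k.two_pow_pos
    rw [mul_zero, add_zero, tm_zero, Bool.xor_false] at h₀
    cases c
    · rfl
    · simp at h₀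
  have hk : k ≠ 0 := by
    rintro rfl
    exact hne fun b => ⟨(hkc b).1, by simp [(hkc b).2 0 one_pos, tm_zero]⟩
  induction n using Nat.strong_induction_on with
  | _ n ih =>
    obtain rfl | hn := n.eq_zero_or_pos
    · simp [tm_zero]
    · have hmod := Nat.mod_lt n k.two_pow_pos
      rw [← Nat.div_add_mod n (2 ^ k), hblock _ _ hmod,
        ih _ (Nat.div_lt_self hn (Nat.one_lt_two_pow hk)), tm_two_pow_mul_add _ hmod]
      simp

/-! ### Morphisms of finite words -/

lemma wordPrefix_succ (w : ℕ → Bool) (n : ℕ) : wordPrefix w (n + 1) = wordPrefix w n ++ [w n] := by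
  simp [wordPrefix, List.range_succ]

lemma length_wordPrefix (w : ℕ → Bool) (n : ℕ) : (wordPrefix w n).length = n := by
  simp [wordPrefix]

namespace IsMorphism

variable {h : List Bool → List Bool} (hh : IsMorphism h) {w y : ℕ → Bool}

include hh

lemma map_nil : h [] = [] := by
  simpa using hh [] []

lemma map_wordPrefix_succ (n : ℕ) :
    h (wordPrefix w (n + 1)) = h (wordPrefix w n) ++ h [w n] := by
  rw [wordPrefix_succ, hh]

lemma blockStart_eq (n : ℕ) :
    blockStart (fun b => (h [b]).length) w n = (h (wordPrefix w n)).length := by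
  induction n with
  | zero => simp [blockStart, wordPrefix, hh.map_nil]
  | succ n ih => rw [blockStart_succ, ih, hh.map_wordPrefix_succ, List.length_append]

lemma isBlockImage (him : IsMorphImage h w y) :
    IsBlockImage (fun b k => (h [b]).getD k false) (fun b => (h [b]).length) w y := by
  intro n k hk
  have hletter := congrArg (·.getD ((h (wordPrefix w n)).length + k) false) (him.1 (n + 1))
  simp only [hh.map_wordPrefix_succ] at hletter
  rw [List.getD_append_right _ _ _ _ (by omega), Nat.add_sub_cancel_left] at hletter
  beta_reduce
  rw [hh.blockStart_eq, ← hletter]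
  simp [wordPrefix, hk]

theorem eq_xor_tm (hne : ¬(h [false] = [false] ∧ h [true] = [true]))
    (hw : PeriodFree (7 / 3) w) (hfix : IsMorphImage h w w) (n : ℕ) : w n = (w 0 ^^ tm n) := by
  have him := hh.isBlockImage hfix
  have hlen := him.len_pos hw hw fun m => by simpa only [hh.blockStart_eq] using hfix.2 m
  refine him.eq_xor_tm hlen hw (fun hid => hne ?_) n
  have hletter (b : Bool) : h [b] = [b] := by
    obtain ⟨hone, hval⟩ := hid b
    obtain ⟨a, ha⟩ := List.length_eq_one_iff.mp hone
    simpa [ha] using hval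
  exact ⟨hletter false, hletter true⟩

end IsMorphism

lemma isMorphism_mu : IsMorphism mu := by
  intro u v
  simp [mu]

lemma mu_wordPrefix {w : ℕ → Bool} (h₀ : ∀ n, w (2 * n) = w n)
    (h₁ : ∀ n, w (2 * n + 1) = !w n) (n : ℕ) : mu (wordPrefix w n) = wordPrefix w (2 * n) := by
  induction n with
  | zero => rfl
  | succ n ih =>
    rw [isMorphism_mu.map_wordPrefix_succ, ih, mul_add_one, wordPrefix_succ, wordPrefix_succ, h₀,
      h₁]
    cases w n <;> simp [mu, muLetter]

lemma isMorphImage_mu {w : ℕ → Bool} (h₀ : ∀ n, w (2 * n) = w n)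
    (h₁ : ∀ n, w (2 * n + 1) = !w n) : IsMorphImage mu w w := by
  simp only [IsMorphImage, mu_wordPrefix h₀ h₁, length_wordPrefix]
  exact ⟨fun _ => trivial, fun m => ⟨m, by omega⟩⟩

/-- An infinite `7/3`-power-free binary word is a fixed point of a non-identity
morphism iff it is the Thue–Morse word `μ^ω(0)` or its complement `μ^ω(1)`. -/
theorem power_free_fixed_point_iff_thue_morse (w : ℕ → Bool)
    (hw : PowerFreeInf (7/3 : ℝ) w) :
    (∃ h : List Bool → List Bool, IsMorphism h ∧
        ¬(h [false] = [false] ∧ h [true] = [true]) ∧ IsMorphImage h w w) ↔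
      (w = tm ∨ w = fun n => !(tm n)) := by
  constructor
  · rintro ⟨h, hh, hne, hfix⟩
    have hw_eq := hh.eq_xor_tm hne hw.periodFree hfix
    cases h₀ : w 0
    · exact .inl (funext fun n => by rw [hw_eq, h₀, Bool.false_xor])
    · exact .inr (funext fun n => by rw [hw_eq, h₀, Bool.true_xor])
  · intro hw_eq
    refine ⟨mu, isMorphism_mu, by simp [mu, muLetter], ?_⟩
    obtain rfl | rfl := hw_eq
    · exact isMorphImage_mu tm_two_mul tm_two_mul_add_one
    · exact isMorphImage_mu (fun n => by rw [tm_two_mul]) (fun n => by rw [tm_two_mul_add_one])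
end

section
/- There exists a morphism h : Σ₂* → Σ₂* such that h is not equal to μ^k for any integer k ≥ 0, h is prolongable on 0, and the infinite fixed point h^ω(0) avoids (7/3 + ε)-powers for every ε > 0. Consequently, the constant 7/3 in the characterization of 7/3-power-free morphic fixed points is best possible. -/
/-!
The morphism is the `19`-uniform `h` with `h(0) = 0110100110110010110` and `h(1)` its complement.
A factor of length `13` of the fixed point `w` determines its position modulo `19`. A repetition
of period `p` that overlaps its shift by `p` in at least `13` letters thus has `19 ∣ p`, and since
each letter of `h(b)` determines `b`, reading every `19`-th letter gives a repetition of period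
`p / 19` in `w` itself, with at least the same exponent. By descent, a repetition of exponent more
than `7/3` would yield one with an overlap of at most `12` letters; its period is at most `8`, so
it is visible inside some `h(ab)`, where there is none. The length `19` is not a power of two,
hence `h` is not a power of `μ`.
-/

section Powers

variable {α : Type*}

theorem hasPeriod_flatten_replicate_append {x y : List α} (hy : y <+: x) (n : ℕ) :
    ((List.replicate n x).flatten ++ y).HasPeriod x.length := by
  have hcomm : x ++ (List.replicate (n + 1) x).flatten =
      (List.replicate (n + 1) x).flatten ++ x := by
    rw [← List.flatten_cons, ← List.replicate_succ, List.replicate_succ', List.flatten_append,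
      List.flatten_singleton]
  have htake : (List.replicate (n + 1) x).flatten.take x.length = x := by
    rw [List.replicate_succ, List.flatten_cons, List.take_left]
  have hperiod : (List.replicate (n + 1) x).flatten.HasPeriod x.length := by
    rw [List.HasPeriod, htake, hcomm]
    exact List.prefix_append _ _
  refine hperiod.infix (List.IsPrefix.isInfix ?_)
  rw [List.replicate_succ', List.flatten_append, List.flatten_singleton]
  exact (List.prefix_append_right_inj _).2 hy

theorem IsPower.exists_hasPeriod {β : ℚ} {z : List Bool} (hz : IsPower β z) :
    ∃ p : ℕ, 0 < p ∧ z.HasPeriod p ∧ (z.length : ℚ) = β * p := by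
  obtain ⟨n, x, y, hx, hy, rfl, rfl⟩ := hz
  have hpos : 0 < x.length := List.length_pos_of_ne_nil hx
  refine ⟨x.length, hpos, hasPeriod_flatten_replicate_append hy n, ?_⟩
  have hlength : ((List.replicate n x).flatten ++ y).length = n * x.length + y.length := by simp
  rw [hlength, Nat.cast_add, Nat.cast_mul]
  field_simp

/-- The factor of length `n` starting at position `i` of the infinite word `w`. -/
def wordFactor (w : ℕ → α) (i n : ℕ) : List α := (List.range n).map fun k => w (i + k)

theorem hasPeriod_wordFactor_iff {w : ℕ → α} {i n p : ℕ} :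
    (wordFactor w i n).HasPeriod p ↔ ∀ j, j + p < n → w (i + j) = w (i + j + p) := by
  simp only [List.hasPeriod_iff_getElem?, wordFactor, List.length_map, List.length_range,
    Nat.lt_sub_iff_add_lt]
  refine forall₂_congr fun j hj => ?_
  simp [hj, (Nat.le_add_right j p).trans_lt hj, add_assoc]

/-- `w` avoids `a⁺`-powers, that is, `β`-powers for all `β > a`: the exponent `n / p` of a factor
of length `n` and period `p` is at most `a`. -/
def PlusPowerFree (a : ℝ) (w : ℕ → α) : Prop :=
  ∀ i n p : ℕ, 0 < p → (wordFactor w i n).HasPeriod p → (n : ℝ) ≤ a * p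

theorem PlusPowerFree.powerFreeInf {a b : ℝ} {w : ℕ → Bool} (hw : PlusPowerFree a w)
    (hab : a < b) : PowerFreeInf b w := by
  rintro z ⟨i, hz⟩ β hβ hpow
  obtain ⟨p, hp, hperiod, hlength⟩ := hpow.exists_hasPeriod
  have hle : (z.length : ℝ) ≤ a * p := hw i z.length p hp (by rwa [wordFactor, ← hz])
  have heq : (z.length : ℝ) = β * p := by exact_mod_cast hlength
  have hlt : a * p < β * p := by gcongr; exact hab.trans_le hβ
  linarith

end Powers

/-- A `q`-uniform morphism on words over `α`, encoded by its values on letters: `g a r` is the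
letter at index `r` of the image of `a`. -/
abbrev UniformMorphism (α : Type*) (q : ℕ) : Type _ := α → Fin q → α

namespace UniformMorphism

variable {α : Type*} {q : ℕ} {g : UniformMorphism α q} {w : ℕ → α}

/-- The action of a uniform morphism on finite words. -/
def wordMap (g : UniformMorphism α q) (x : List α) : List α := x.flatMap fun a => List.ofFn (g a)

theorem wordMap_append (g : UniformMorphism α q) (x y : List α) :
    g.wordMap (x ++ y) = g.wordMap x ++ g.wordMap y :=
  List.flatMap_append

theorem length_wordMap (g : UniformMorphism α q) (x : List α) :
    (g.wordMap x).length = q * x.length := by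
  simp [wordMap, List.length_flatMap, mul_comm]

/-- `w` is a fixed point of the extension of `g` to infinite words, stated letter by letter. -/
def IsFixedPoint (g : UniformMorphism α q) (w : ℕ → α) : Prop :=
  ∀ (t : ℕ) (r : Fin q), w (q * t + r) = g (w t) r

/-- The infinite word `g^ω(a)`. Its letter at index `n` is obtained by following the base-`q`
digits of `n`, most significant first, from the letter `a`. -/
def fixedPoint [NeZero q] (g : UniformMorphism α q) (a : α) (n : ℕ) : α :=
  (Nat.digits q n).foldr (fun d b => g b (Fin.ofNat q d)) a

theorem fixedPoint_zero [NeZero q] (g : UniformMorphism α q) (a : α) : g.fixedPoint a 0 = a := by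
  simp [fixedPoint]

theorem isFixedPoint_fixedPoint [NeZero q] (hq : 1 < q) {a : α} (ha : g a 0 = a) :
    g.IsFixedPoint (g.fixedPoint a) := by
  intro t r
  by_cases hzero : r = 0 ∧ t = 0
  · obtain ⟨rfl, rfl⟩ := hzero
    simp [fixedPoint_zero, ha]
  · have hne : (r : ℕ) ≠ 0 ∨ t ≠ 0 := by
      simpa only [ne_eq, Fin.val_eq_zero_iff, ← not_and_or] using hzero
    rw [fixedPoint, add_comm, Nat.digits_add q hq r t r.isLt hne, List.foldr_cons,
      Fin.ofNat_val_eq_self]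
    rfl

/-- The image of the two-letter word `ab`. Every factor of length at most `q + 1` of a fixed point
lies inside such an image, so its properties can be decided there. -/
def pairImage (g : UniformMorphism α q) (a b : α) : Fin (q + q) → α := Fin.append (g a) (g b)

theorem IsFixedPoint.apply_mul_add (hw : g.IsFixedPoint w) (t : ℕ) (k : Fin (q + q)) :
    w (q * t + k) = g.pairImage (w t) (w (t + 1)) k := by
  refine Fin.addCases (fun r => ?_) (fun r => ?_) k
  · rw [pairImage, Fin.append_left, Fin.val_castAdd, hw]
  · rw [pairImage, Fin.append_right, Fin.val_natAdd, ← add_assoc, ← Nat.mul_succ, hw]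

theorem IsFixedPoint.apply_add (hw : g.IsFixedPoint w) {i k : ℕ} (hk : i % q + k < q + q) :
    w (i + k) = g.pairImage (w (i / q)) (w (i / q + 1)) ⟨i % q + k, hk⟩ := by
  rw [← hw.apply_mul_add, ← add_assoc, Nat.div_add_mod]

theorem IsFixedPoint.wordMap_wordPrefix {g : UniformMorphism Bool q} {w : ℕ → Bool}
    (hw : g.IsFixedPoint w) (n : ℕ) :
    g.wordMap (wordPrefix w n) = wordPrefix w (q * n) := by
  induction n with
  | zero => rfl
  | succ n ih =>
    have hblock : List.ofFn (g (w n)) = (List.range q).map fun r => w (q * n + r) := by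
      exact List.ext_getElem (by simp) fun r hr _ => by
        simpa using (hw n ⟨r, by simpa using hr⟩).symm
    simp only [wordPrefix] at ih ⊢
    rw [List.range_succ, List.map_append, wordMap_append, ih, Nat.mul_succ, List.range_add,
      List.map_append, List.map_map]
    simp [wordMap, hblock, Function.comp_def]

theorem IsFixedPoint.isMorphImage {g : UniformMorphism Bool q} {w : ℕ → Bool}
    (hw : g.IsFixedPoint w) (hq : 0 < q) : IsMorphImage g.wordMap w w := by
  refine ⟨fun n => ?_, fun m => ⟨m, ?_⟩⟩
  · rw [length_wordMap, hw.wordMap_wordPrefix]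
    simp [wordPrefix]
  · rw [length_wordMap]
    simpa [wordPrefix] using Nat.le_mul_of_pos_left m hq

theorem IsFixedPoint.hasPeriod_div (hw : g.IsFixedPoint w)
    (hg : ∀ r, Function.Injective fun a => g a r) (hq : 0 < q) {i n p : ℕ}
    (hperiod : (wordFactor w i n).HasPeriod (q * p)) :
    (wordFactor w (i / q) (n ⌈/⌉ q)).HasPeriod p := by
  rw [hasPeriod_wordFactor_iff] at hperiod ⊢
  intro j hj
  let r : Fin q := ⟨i % q, Nat.mod_lt i hq⟩
  have hletter (k : ℕ) : w (i + q * k) = g (w (i / q + k)) r := by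
    rw [← hw, mul_add, add_right_comm, Nat.div_add_mod]
  have hlt : q * j + q * p < n := by
    rw [← mul_add]
    exact lt_of_not_ge fun hle => hj.not_ge ((ceilDiv_le_iff_le_mul hq).2 hle)
  apply hg r
  simpa only [add_assoc, ← mul_add, hletter] using hperiod (q * j) hlt

theorem IsFixedPoint.plusPowerFree (hw : g.IsFixedPoint w) (hq : 1 < q)
    (hg : ∀ r, Function.Injective fun a => g a r) {L : ℕ} {a : ℝ}
    (hsync : ∀ i i', (∀ j < L, w (i + j) = w (i' + j)) → i ≡ i' [MOD q])
    (hshort : ∀ i n p : ℕ, 0 < p → n < L + p → (wordFactor w i n).HasPeriod p →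
      (n : ℝ) ≤ a * p) :
    PlusPowerFree a w := by
  intro i n p hp hperiod
  induction p using Nat.strong_induction_on generalizing i n with
  | _ p ih =>
    rcases lt_or_ge n (L + p) with hn | hn
    · exact hshort i n p hp hn hperiod
    have hdvd : q ∣ p := by
      have hmod : i ≡ i + p [MOD q] := hsync i (i + p) fun j hj => by
        rw [hasPeriod_wordFactor_iff.1 hperiod j (by lia), add_right_comm]
      simpa using (Nat.modEq_iff_dvd' (Nat.le_add_right i p)).1 hmod
    obtain ⟨p', rfl⟩ := hdvd
    have hp' : 0 < p' := Nat.pos_of_mul_pos_left hp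
    have hq0 : 0 < q := Nat.zero_lt_of_lt hq
    have hdescend : ((n ⌈/⌉ q : ℕ) : ℝ) ≤ a * p' :=
      ih p' (lt_mul_left hp' hq) (i / q) _ hp' (hw.hasPeriod_div hg hq0 hperiod)
    calc (n : ℝ) ≤ q * (n ⌈/⌉ q : ℕ) := mod_cast le_smul_ceilDiv hq0
      _ ≤ q * (a * p') := by gcongr
      _ = a * (q * p' : ℕ) := by push_cast; ring

end UniformMorphism

theorem length_mu (x : List Bool) : (mu x).length = 2 * x.length := by
  induction x with
  | nil => rfl
  | cons b x ih => cases b <;> simp_all [mu, muLetter] <;> ring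

theorem length_iterate_mu (k : ℕ) (x : List Bool) : (mu^[k] x).length = 2 ^ k * x.length := by
  have hsemiconj : Function.Semiconj List.length mu (2 * ·) := length_mu
  rw [(hsemiconj.iterate_right k).eq, mul_left_iterate]

theorem UniformMorphism.wordMap_ne_iterate_mu {q : ℕ} (g : UniformMorphism Bool q) {k : ℕ}
    (hq : q ≠ 2 ^ k) : g.wordMap ≠ mu^[k] := by
  intro h
  have hlength := g.length_wordMap [false]
  rw [h, length_iterate_mu] at hlength
  exact hq (by simpa using hlength.symm)

/-- The word `0110100110110010110`, the image of `0` under `sevenThirdsMorphism`. -/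
def sevenThirdsBlock : Fin 19 → Bool :=
  ![false, true, true, false, true, false, false, true, true, false, true, true, false, false,
    true, false, true, true, false]

/-- The `19`-uniform morphism mapping `0` to `sevenThirdsBlock` and `1` to its complement. -/
def sevenThirdsMorphism : UniformMorphism Bool 19 := fun b r => xor b (sevenThirdsBlock r)

namespace sevenThirdsMorphism

variable {w : ℕ → Bool}

theorem injective_apply (r : Fin 19) : Function.Injective fun b => sevenThirdsMorphism b r :=
  fun _ _ => Bool.xor_left_inj.1

theorem eq_of_pairImage_eq : ∀ (a b c d : Bool) (r s : Fin 19),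
    (∀ j : Fin 13, sevenThirdsMorphism.pairImage a b ⟨r + j, by lia⟩ =
      sevenThirdsMorphism.pairImage c d ⟨s + j, by lia⟩) → r = s := by
  decide +kernel

theorem exists_pairImage_ne : ∀ (a b : Bool) (r : Fin 19) (p : Fin 9), 0 < p →
    ∃ j : Fin 11, 3 * (j : ℕ) ≤ 4 * p ∧ sevenThirdsMorphism.pairImage a b ⟨r + j, by lia⟩ ≠
      sevenThirdsMorphism.pairImage a b ⟨r + (j + p), by lia⟩ := by
  decide +kernel

theorem modEq_of_forall_apply_eq (hw : sevenThirdsMorphism.IsFixedPoint w) {i i' : ℕ}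
    (heq : ∀ j < 13, w (i + j) = w (i' + j)) : i ≡ i' [MOD 19] := by
  have hmod := eq_of_pairImage_eq (w (i / 19)) (w (i / 19 + 1)) (w (i' / 19)) (w (i' / 19 + 1))
    ⟨i % 19, Nat.mod_lt i (by simp)⟩ ⟨i' % 19, Nat.mod_lt i' (by simp)⟩ fun j => by
      rw [← hw.apply_add, ← hw.apply_add, heq j j.isLt]
  exact Fin.mk.inj hmod

theorem exists_apply_ne (hw : sevenThirdsMorphism.IsFixedPoint w) (i : ℕ) {p : ℕ} (hp : 0 < p)
    (hp' : p < 9) : ∃ j, 3 * j ≤ 4 * p ∧ w (i + j) ≠ w (i + j + p) := by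
  obtain ⟨j, hj, hne⟩ := exists_pairImage_ne (w (i / 19)) (w (i / 19 + 1))
    ⟨i % 19, Nat.mod_lt i (by simp)⟩ ⟨p, hp'⟩ hp
  refine ⟨j, hj, ?_⟩
  rwa [← hw.apply_add, ← hw.apply_add, ← add_assoc] at hne

theorem plusPowerFree (hw : sevenThirdsMorphism.IsFixedPoint w) : PlusPowerFree (7 / 3) w := by
  refine hw.plusPowerFree (by simp) injective_apply
    (fun _ _ => modEq_of_forall_apply_eq hw) fun i n p hp hn hperiod => ?_
  by_contra! hlong
  have hlong' : 7 * p < 3 * n := by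
    have : (7 * p : ℝ) < 3 * n := by linarith
    exact_mod_cast this
  obtain ⟨j, hj, hne⟩ := exists_apply_ne hw i hp (by lia)
  exact hne (hasPeriod_wordFactor_iff.1 hperiod j (by lia))

end sevenThirdsMorphism

/-- The constant `7/3` is best possible: there is a morphism `h` which is not `μ^k`
for any `k ≥ 0`, is prolongable on `0`, and whose infinite fixed point `h^ω(0)`
avoids `(7/3 + ε)`-powers for every `ε > 0`. -/
theorem seven_thirds_best_possible :
    ∃ h : List Bool → List Bool, IsMorphism h ∧ (∀ k : ℕ, h ≠ mu^[k]) ∧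
      (∃ x : List Bool, x ≠ [] ∧ h [false] = false :: x) ∧
      ∃ w : ℕ → Bool, w 0 = false ∧ IsMorphImage h w w ∧
        ∀ ε : ℝ, 0 < ε → PowerFreeInf (7/3 + ε) w := by
  let w := sevenThirdsMorphism.fixedPoint false
  have hw : sevenThirdsMorphism.IsFixedPoint w :=
    UniformMorphism.isFixedPoint_fixedPoint (by simp) rfl
  have hnotpow (k : ℕ) : 19 ≠ 2 ^ k := by
    rcases k with _ | k <;> lia
  exact ⟨sevenThirdsMorphism.wordMap, sevenThirdsMorphism.wordMap_append,
    fun k => sevenThirdsMorphism.wordMap_ne_iterate_mu (hnotpow k),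
    ⟨(sevenThirdsMorphism.wordMap [false]).tail, by decide, rfl⟩,
    w, sevenThirdsMorphism.fixedPoint_zero false, hw.isMorphImage (by simp),
    fun ε hε => (sevenThirdsMorphism.plusPowerFree hw).powerFreeInf (lt_add_of_pos_right _ hε)⟩
end
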